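/- Let A ∈ GL_N(C((t))). Then there exist a column transformation matrix C ∈ GL_N(C[[t]]), a matrix U ∈ U⁻_{M,N}(C((t))), integers θ'_1, ..., θ'_{N-M-1}, g, g' ∈ GL_M(C[[t]]) and h ∈ GL_{M+1}(C[[t]]) such that (g ⋉ U) · A · C equals a matrix of the form L_{(λ,(θ,θ'))} up to the block GL_M(O) × GL_{M+1}(O) action; i.e., every double coset (GL_M(O) ⋉ U⁻_{M,N}(F)) \ GL_N(F) / GL_N(O) has a representative L_{(λ,(θ,θ'))} with (λ,θ) dominant of length (M, M+1). -/

import Mathlib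

/- Common setup: `F = ℂ((t))` the field of formal Laurent series, `O = ℂ[[t]]` its ring of
integers (elements with no negative coefficients), `tpow k = t^k`.  `InGLO A` says that the
square matrix `A` lies in `GL(O)`, i.e. both `A` and an inverse of `A` have entries in `O`. -/

noncomputable section

abbrev F : Type := LaurentSeries ℂ

/-- `t^k` for `k : ℤ`, where `t` is the uniformizer of `ℂ((t))`. -/
noncomputable def tpow (k : ℤ) : F := (HahnSeries.single (1 : ℤ) (1 : ℂ) : F) ^ k

/-- The ring of integers `O = ℂ[[t]] ⊆ ℂ((t))`. -/
def Oint : Set F := {f : F | ∀ m : ℤ, m < 0 → f.coeff m = 0}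

/-- `A ∈ GL_n(O)`. -/
def InGLO {n : ℕ} (A : Matrix (Fin n) (Fin n) F) : Prop :=
  ∃ B : Matrix (Fin n) (Fin n) F,
    (∀ i j, A i j ∈ Oint) ∧ (∀ i j, B i j ∈ Oint) ∧ A * B = 1 ∧ B * A = 1

/-- Block-diagonal embedding of an `M×M` matrix into the top-left corner of an `n×n`
matrix, with `1`'s on the rest of the diagonal. -/
noncomputable def embTop (M n : ℕ) (g : Matrix (Fin M) (Fin M) F) :
    Matrix (Fin n) (Fin n) F := fun i j =>
  if hi : (i : ℕ) < M then
    (if hj : (j : ℕ) < M then g ⟨i, hi⟩ ⟨j, hj⟩ else 0)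
  else (if (i : ℕ) = (j : ℕ) then 1 else 0)

/-- `u ∈ U⁻_{M,N}(F)`, the unipotent radical of the negative parabolic of type
`(M+1,1,…,1)` in `GL_N`: identity diagonal, and (0-based) the only nonzero off-diagonal
entries are in rows `i ≥ M+1` and columns `j < i`. -/
def InUminus (M : ℕ) {n : ℕ} (u : Matrix (Fin n) (Fin n) F) : Prop :=
  (∀ i, u i i = 1) ∧
  ∀ i j : Fin n, i ≠ j → ((i : ℕ) ≤ M ∨ (i : ℕ) ≤ (j : ℕ)) → u i j = 0

/-- The representative `L_{(λ,(θ,θ'))} ∈ GL_N(F)`, `N = M+1+K`: the upper-left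
`(M+1)×(M+1)` block has diagonal `t^{λ_i+θ_i}` (`i ≤ M`) and last row
`(t^{θ_1},…,t^{θ_{M+1}})`, and the lower-right block is `diag(t^{θ'_1},…,t^{θ'_K})`. -/
noncomputable def LmatN (M K : ℕ) (lam : Fin M → ℤ) (th : Fin (M + 1) → ℤ)
    (th' : Fin K → ℤ) : Matrix (Fin (M + 1 + K)) (Fin (M + 1 + K)) F := fun i j =>
  if hi : (i : ℕ) < M then
    (if (i : ℕ) = (j : ℕ) then tpow (lam ⟨i, hi⟩ + th ⟨i, by omega⟩) else 0)
  else if hi2 : (i : ℕ) = M then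
    (if hj : (j : ℕ) < M + 1 then tpow (th ⟨j, hj⟩) else 0)
  else if (i : ℕ) = (j : ℕ) then
    tpow (th' ⟨(i : ℕ) - (M + 1), by have := i.isLt; omega⟩)
  else 0

open Matrix

theorem my_mem_Oint {x : F} : x ∈ Oint ↔ x = 0 ∨ 0 ≤ x.order := by
  constructor
  · intro h
    by_cases hx : x = 0
    · exact Or.inl hx
    · right
      by_contra hlt
      push Not at hlt
      exact hx (HahnSeries.coeff_order_eq_zero.mp (h _ hlt))
  · rintro (rfl | h) m hm
    · simp
    · exact HahnSeries.coeff_eq_zero_of_lt_order (lt_of_lt_of_le hm h)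

theorem my_tpow_ne (k : ℤ) : tpow k ≠ 0 := by
  unfold tpow
  exact zpow_ne_zero _ (by simp)

theorem my_tpow_add (a b : ℤ) : tpow (a + b) = tpow a * tpow b := by
  unfold tpow
  exact zpow_add₀ (by simp) a b

theorem my_tpow_zero : tpow 0 = 1 := by simp [tpow]

theorem my_tpow_neg (a : ℤ) : tpow (-a) = (tpow a)⁻¹ := by simp [tpow]

theorem my_order_mul {x y : F} (hx : x ≠ 0) (hy : y ≠ 0) :
    (x * y).order = x.order + y.order := HahnSeries.order_mul hx hy

theorem my_order_inv {x : F} (hx : x ≠ 0) : (x⁻¹).order = - x.order := by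
  have := my_order_mul hx (inv_ne_zero hx)
  rw [mul_inv_cancel₀ hx] at this
  rw [HahnSeries.order_one] at this
  omega

theorem my_tpow_order (k : ℤ) : (tpow k).order = k := by
  have h1 : (tpow 1).order = 1 := by
    simp [tpow, HahnSeries.order_single]
  have hn : ∀ n : ℕ, (tpow n).order = n := by
    intro n
    induction n with
    | zero => simp [my_tpow_zero]
    | succ n ih =>
      push_cast
      rw [my_tpow_add, my_order_mul (my_tpow_ne _) (my_tpow_ne _), ih, h1]
  obtain ⟨n, rfl | rfl⟩ := k.eq_nat_or_neg
  · exact hn n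
  · rw [my_tpow_neg, my_order_inv (my_tpow_ne _), hn]

/-- The ring of integers as a subring. -/
def Osub : Subring F where
  carrier := Oint
  zero_mem' := my_mem_Oint.mpr (Or.inl rfl)
  one_mem' := my_mem_Oint.mpr (Or.inr (by simp))
  add_mem' := by
    intro a b ha hb m hm
    rw [HahnSeries.coeff_add, ha m hm, hb m hm, add_zero]
  neg_mem' := by
    intro a ha m hm
    rw [HahnSeries.coeff_neg, ha m hm, neg_zero]
  mul_mem' := by
    intro a b ha hb
    by_cases h1 : a = 0
    · subst h1; simp only [zero_mul]; exact my_mem_Oint.mpr (Or.inl rfl)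
    by_cases h2 : b = 0
    · subst h2; simp only [mul_zero]; exact my_mem_Oint.mpr (Or.inl rfl)
    rw [my_mem_Oint] at *
    right
    rw [my_order_mul h1 h2]
    have := ha.resolve_left h1
    have := hb.resolve_left h2
    omega

theorem my_mem {x : F} : x ∈ Osub ↔ x = 0 ∨ 0 ≤ x.order := my_mem_Oint

theorem my_tpow_mem {k : ℤ} : tpow k ∈ Osub ↔ 0 ≤ k := by
  rw [my_mem, my_tpow_order]
  simp [my_tpow_ne]

theorem my_div_mem {x y : F} (hx : x ≠ 0) (h : y = 0 ∨ x.order ≤ y.order) :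
    x⁻¹ * y ∈ Osub := by
  rw [my_mem]
  by_cases hy : y = 0
  · left; simp [hy]
  · right
    rw [my_order_mul (inv_ne_zero hx) hy, my_order_inv hx]
    have := h.resolve_left hy
    omega

theorem my_unit {x : F} (hx : x ≠ 0) :
    ∃ e : F, e ≠ 0 ∧ e ∈ Osub ∧ e⁻¹ ∈ Osub ∧ x = tpow x.order * e := by
  have ht := my_tpow_ne x.order
  have he : (tpow x.order)⁻¹ * x ≠ 0 := mul_ne_zero (inv_ne_zero ht) hx
  have ho : ((tpow x.order)⁻¹ * x).order = 0 := by
    rw [my_order_mul (inv_ne_zero ht) hx, my_order_inv ht, my_tpow_order]; omega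
  refine ⟨(tpow x.order)⁻¹ * x, he, my_mem.mpr (Or.inr ho.ge), my_mem.mpr (Or.inr ?_), ?_⟩
  · rw [my_order_inv he, ho]; simp
  · rw [mul_inv_cancel_left₀ ht]

theorem my_order_add {x y : F} (hy : y ≠ 0) (h : y.order < x.order) :
    x + y ≠ 0 ∧ (x + y).order = y.order := by
  have hc : (x + y).coeff y.order ≠ 0 := by
    rw [HahnSeries.coeff_add, HahnSeries.coeff_eq_zero_of_lt_order h, zero_add]
    exact fun h => hy (HahnSeries.coeff_order_eq_zero.mp h)
  have hne : x + y ≠ 0 := by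
    rintro h0; rw [h0] at hc; simp at hc
  refine ⟨hne, le_antisymm (HahnSeries.order_le_of_coeff_ne_zero hc) ?_⟩
  have := HahnSeries.min_order_le_order_add hne
  rw [min_eq_right h.le] at this
  exact this

/-- `GL_n(O)` over an arbitrary finite index type. -/
def GLO {n : Type} [Fintype n] [DecidableEq n] (A : Matrix n n F) : Prop :=
  ∃ B : Matrix n n F,
    (∀ i j, A i j ∈ Osub) ∧ (∀ i j, B i j ∈ Osub) ∧ A * B = 1 ∧ B * A = 1

theorem my_mul_mem {m n p : Type} [Fintype n] {A : Matrix m n F} {B : Matrix n p F}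
    (hA : ∀ i j, A i j ∈ Osub) (hB : ∀ i j, B i j ∈ Osub) : ∀ i j, (A * B) i j ∈ Osub := by
  intro i j
  rw [Matrix.mul_apply]
  exact Subring.sum_mem _ fun k _ => Subring.mul_mem _ (hA _ _) (hB _ _)

theorem my_one_mem {n : Type} [DecidableEq n] : ∀ i j, (1 : Matrix n n F) i j ∈ Osub := by
  intro i j
  rw [Matrix.one_apply]
  split_ifs
  · exact Subring.one_mem _
  · exact Subring.zero_mem _

section
set_option linter.unusedSectionVars false
variable {m n : Type} [Fintype n] [DecidableEq n] [Fintype m] [DecidableEq m]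

theorem GLO.one : GLO (1 : Matrix n n F) := ⟨1, my_one_mem, my_one_mem, by simp, by simp⟩

theorem GLO.mul {A A' : Matrix n n F} (h : GLO A) (h' : GLO A') : GLO (A * A') := by
  obtain ⟨B, h1, h2, h3, h4⟩ := h
  obtain ⟨B', h1', h2', h3', h4'⟩ := h'
  refine ⟨B' * B, my_mul_mem h1 h1', my_mul_mem h2' h2, ?_, ?_⟩
  · rw [Matrix.mul_assoc, ← Matrix.mul_assoc A', h3', Matrix.one_mul, h3]
  · rw [Matrix.mul_assoc, ← Matrix.mul_assoc B, h4, Matrix.one_mul, h4']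

theorem GLO.submatrix {A : Matrix n n F} (h : GLO A) (e f : m ≃ n) : GLO (A.submatrix e f) := by
  obtain ⟨B, h1, h2, h3, h4⟩ := h
  refine ⟨B.submatrix f e, fun i j => h1 _ _, fun i j => h2 _ _, ?_, ?_⟩
  · rw [Matrix.submatrix_mul_equiv, h3, Matrix.submatrix_one_equiv]
  · rw [Matrix.submatrix_mul_equiv, h4, Matrix.submatrix_one_equiv]

theorem my_blocks_mem {A : Matrix n n F} {B : Matrix n m F} {C : Matrix m n F} {D : Matrix m m F}
    (hA : ∀ i j, A i j ∈ Osub) (hB : ∀ i j, B i j ∈ Osub) (hC : ∀ i j, C i j ∈ Osub)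
    (hD : ∀ i j, D i j ∈ Osub) : ∀ i j, (Matrix.fromBlocks A B C D) i j ∈ Osub := by
  rintro (i | i) (j | j)
  · exact hA _ _
  · exact hB _ _
  · exact hC _ _
  · exact hD _ _

theorem my_neg_mem {A : Matrix n m F} (hA : ∀ i j, A i j ∈ Osub) : ∀ i j, (-A) i j ∈ Osub :=
  fun i j => Subring.neg_mem _ (hA i j)

theorem my_zero_mem : ∀ i j, (0 : Matrix n m F) i j ∈ Osub :=
  fun _ _ => Subring.zero_mem _

theorem GLO.lower {A : Matrix n n F} {D : Matrix m m F} {C : Matrix m n F} (h : GLO A)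
    (h' : GLO D) (hC : ∀ i j, C i j ∈ Osub) : GLO (fromBlocks A 0 C D) := by
  obtain ⟨B, h1, h2, h3, h4⟩ := h
  obtain ⟨B', h1', h2', h3', h4'⟩ := h'
  refine ⟨fromBlocks B 0 (-(B' * C * B)) B', my_blocks_mem h1 my_zero_mem hC h1',
    my_blocks_mem h2 my_zero_mem (my_neg_mem (my_mul_mem (my_mul_mem h2' hC) h2)) h2', ?_, ?_⟩
  · rw [fromBlocks_multiply, ← fromBlocks_one]
    congr 1 <;> simp [h3, h3', ← Matrix.mul_assoc]
  · rw [fromBlocks_multiply, ← fromBlocks_one]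
    congr 1 <;> simp [h4, h4', Matrix.mul_assoc]

theorem GLO.upper {A : Matrix n n F} {D : Matrix m m F} {C : Matrix n m F} (h : GLO A)
    (h' : GLO D) (hC : ∀ i j, C i j ∈ Osub) : GLO (fromBlocks A C 0 D) := by
  have := (GLO.lower h' h hC).submatrix (Equiv.sumComm n m) (Equiv.sumComm n m)
  simpa using this

theorem GLO.diagonal {d : n → F} (h0 : ∀ i, d i ≠ 0) (h : ∀ i, d i ∈ Osub)
    (h' : ∀ i, (d i)⁻¹ ∈ Osub) : GLO (Matrix.diagonal d) := by
  refine ⟨Matrix.diagonal fun i => (d i)⁻¹, ?_, ?_, ?_, ?_⟩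
  · intro i j; rw [Matrix.diagonal_apply]; split_ifs
    · exact h _
    · exact Subring.zero_mem _
  · intro i j; rw [Matrix.diagonal_apply]; split_ifs
    · exact h' _
    · exact Subring.zero_mem _
  · rw [Matrix.diagonal_mul_diagonal, ← Matrix.diagonal_one]
    congr 1; ext i; simp [h0 i]
  · rw [Matrix.diagonal_mul_diagonal, ← Matrix.diagonal_one]
    congr 1; ext i; simp [h0 i]

theorem my_perm (A : Matrix n n F) (σ : Equiv.Perm n) :
    A.submatrix id σ = A * (1 : Matrix n n F).submatrix id σ := by
  ext i j; simp [Matrix.mul_apply, Matrix.one_apply]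

theorem my_perm' (A : Matrix n n F) (σ : Equiv.Perm n) :
    A.submatrix σ id = (1 : Matrix n n F).submatrix σ id * A := by
  ext i j; simp [Matrix.mul_apply, Matrix.one_apply]

theorem my_det_GLO {A : Matrix n n F} (h : GLO A) : A.det ≠ 0 := by
  obtain ⟨B, _, _, h3, _⟩ := h
  have := congrArg Matrix.det h3
  rw [Matrix.det_mul, Matrix.det_one] at this
  exact left_ne_zero_of_mul_eq_one this
end

/-- Splitting off the first index. -/
def eS (n : ℕ) : Fin 1 ⊕ Fin n ≃ Fin (n + 1) where
  toFun := Sum.elim (fun _ => 0) Fin.succ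
  invFun := Fin.cases (Sum.inl 0) Sum.inr
  left_inv := by
    rintro (i | i)
    · simp [Subsingleton.elim i 0]
    · simp
  right_inv := by
    intro i
    refine Fin.cases ?_ (fun i => ?_) i <;> simp

/-- `1 × 1` matrix. -/
abbrev sc (x : F) : Matrix (Fin 1) (Fin 1) F := Matrix.diagonal fun _ => x

theorem sc_mul (x y : F) : sc x * sc y = sc (x * y) := by
  simp [sc]

theorem sc_one : sc 1 = 1 := by simp [sc]

theorem eq_sc (A : Matrix (Fin 1) (Fin 1) F) : A = sc (A 0 0) := by
  ext i j
  rw [Subsingleton.elim i 0, Subsingleton.elim j 0]; simp [sc]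

theorem sc_neg (x : F) : -sc x = sc (-x) := by
  simp [sc, Matrix.diagonal_neg]

theorem my_iwasawa (n : ℕ) : ∀ (A : Matrix (Fin n) (Fin n) F), A.det ≠ 0 →
    ∃ (u C : Matrix (Fin n) (Fin n) F) (d : Fin n → ℤ),
      (∀ i, u i i = 1) ∧ (∀ i j, i < j → u i j = 0) ∧ GLO C ∧
      u * A * C = Matrix.diagonal fun i => tpow (d i) := by
  induction n with
  | zero =>
    intro A _
    exact ⟨1, 1, fun _ => 0, fun i => i.elim0, fun i => i.elim0, GLO.one, by ext i; exact i.elim0⟩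
  | succ n ih =>
    intro A hA
    set A0 := A.submatrix (eS n) (eS n) with hA0
    have hdet0 : A0.det ≠ 0 := by rw [hA0, Matrix.det_submatrix_equiv_self]; exact hA
    have hex : ∃ j, A0 (Sum.inl 0) j ≠ 0 := by
      by_contra h
      push Not at h
      exact hdet0 (Matrix.det_eq_zero_of_row_eq_zero _ h)
    classical
    obtain ⟨j0, hj0, hmin⟩ := Finset.exists_min_image
      (Finset.univ.filter fun j => A0 (Sum.inl 0) j ≠ 0) (fun j => (A0 (Sum.inl 0) j).order)
      (by obtain ⟨j, hj⟩ := hex; exact ⟨j, by simpa using hj⟩)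
    simp only [Finset.mem_filter, Finset.mem_univ, true_and] at hj0 hmin
    set σ := Equiv.swap (Sum.inl 0) j0 with hσ
    set Pσ := (1 : Matrix (Fin 1 ⊕ Fin n) (Fin 1 ⊕ Fin n) F).submatrix id σ with hPσ
    have hPG : GLO Pσ := GLO.one.submatrix (Equiv.refl _) σ
    set B := A0 * Pσ with hB
    have hB' : B = A0.submatrix id σ := (my_perm A0 σ).symm
    set x := A0 (Sum.inl 0) j0 with hx
    have hBx : B.toBlocks₁₁ = sc x := by
      rw [eq_sc B.toBlocks₁₁, hB']
      simp [Matrix.toBlocks₁₁, hσ, hx]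
    set b := B.toBlocks₁₂ with hb
    have hbO : ∀ i j, (sc x⁻¹ * b) i j ∈ Osub := by
      intro i j
      rw [Subsingleton.elim i 0, Matrix.diagonal_mul]
      apply my_div_mem hj0
      rw [hb, hB']
      simp only [Matrix.toBlocks₁₂, Matrix.submatrix_apply, Matrix.of_apply, id]
      by_cases h0 : A0 (Sum.inl 0) (σ (Sum.inr j)) = 0
      · exact Or.inl h0
      · exact Or.inr (hmin _ h0)
    set y := B.toBlocks₂₁
    set A' := B.toBlocks₂₂
    have hBB : B = fromBlocks (sc x) b y A' := by
      rw [← hBx]; exact (Matrix.fromBlocks_toBlocks B).symm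
    obtain ⟨e, he0, he, he', hxe⟩ := my_unit hj0
    set k := x.order
    have hC1 : GLO (fromBlocks (sc e⁻¹) (-(sc x⁻¹ * b)) 0 (1 : Matrix (Fin n) (Fin n) F)) := by
      refine GLO.upper (GLO.diagonal (fun _ => inv_ne_zero he0) (fun _ => he') (fun _ => ?_))
        GLO.one (my_neg_mem hbO)
      simpa using he
    have hmul1 : B * fromBlocks (sc e⁻¹) (-(sc x⁻¹ * b)) 0 (1 : Matrix (Fin n) (Fin n) F)
        = fromBlocks (sc (tpow k)) 0 (y * sc e⁻¹) (A' - y * sc x⁻¹ * b) := by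
      rw [hBB, fromBlocks_multiply]
      congr 1
      · rw [sc_mul, hxe]; simp [he0]
      · rw [Matrix.mul_neg, ← Matrix.mul_assoc, sc_mul, mul_inv_cancel₀ hj0, sc_one]; simp
      · simp
      · simp [Matrix.mul_assoc, sub_eq_add_neg, add_comm]
    set A'' := A' - y * sc x⁻¹ * b
    have hA'' : A''.det ≠ 0 := by
      have h1 : (B * fromBlocks (sc e⁻¹) (-(sc x⁻¹ * b)) 0
          (1 : Matrix (Fin n) (Fin n) F)).det ≠ 0 := by
        rw [hB, Matrix.det_mul, Matrix.det_mul]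
        exact mul_ne_zero (mul_ne_zero hdet0 (my_det_GLO hPG)) (my_det_GLO hC1)
      rw [hmul1, Matrix.det_fromBlocks_zero₁₂] at h1
      exact right_ne_zero_of_mul h1
    obtain ⟨u', C', d', hu1, hu2, hC', hd'⟩ := ih A'' hA''
    set ub := fromBlocks (1 : Matrix (Fin 1) (Fin 1) F) 0
      (-(u' * (y * sc e⁻¹) * sc (tpow k)⁻¹)) u' with hub
    set Cb := Pσ * fromBlocks (sc e⁻¹) (-(sc x⁻¹ * b)) 0 (1 : Matrix (Fin n) (Fin n) F) *
      fromBlocks 1 0 0 C' with hCb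
    have hmain : ub * A0 * Cb =
        fromBlocks (sc (tpow k)) 0 0 (Matrix.diagonal fun i => tpow (d' i)) := by
      rw [hCb, Matrix.mul_assoc ub, ← Matrix.mul_assoc A0, ← Matrix.mul_assoc A0, ← hB, hmul1, hub,
        ← Matrix.mul_assoc, fromBlocks_multiply, fromBlocks_multiply]
      congr 1
      · simp
      · simp
      · simp only [Matrix.zero_mul, Matrix.mul_zero, Matrix.mul_one, add_zero, Matrix.neg_mul]
        rw [Matrix.mul_assoc _ (sc (tpow k)⁻¹), sc_mul, inv_mul_cancel₀ (my_tpow_ne _), sc_one]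
        simp
      · simpa using hd'
    refine ⟨ub.submatrix (eS n).symm (eS n).symm, Cb.submatrix (eS n).symm (eS n).symm,
      Fin.cons k d', ?_, ?_, ?_, ?_⟩
    · intro i
      refine Fin.cases ?_ (fun i => ?_) i
      · simp [eS, hub]
      · simp [eS, hub, hu1]
    · intro i j
      refine Fin.cases ?_ (fun i => ?_) i <;> refine Fin.cases ?_ (fun j => ?_) j
      · simp
      · simp [eS, hub]
      · simp
      · simpa [eS, hub] using hu2 i j
    · exact ((hPG.mul hC1).mul (GLO.lower GLO.one hC' my_zero_mem)).submatrix _ _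
    · have hAA : A = A0.submatrix (eS n).symm (eS n).symm := by simp [hA0]
      rw [hAA, Matrix.submatrix_mul_equiv, Matrix.submatrix_mul_equiv, hmain]
      ext i j
      refine Fin.cases ?_ (fun i => ?_) i <;> refine Fin.cases ?_ (fun j => ?_) j
      · simp [eS]
      · simp [eS, Matrix.diagonal_apply, (Fin.succ_ne_zero _).symm]
      · simp [eS, Matrix.diagonal_apply]
      · simp [eS, Matrix.diagonal_apply]

theorem my_smith (n : ℕ) : ∀ (A : Matrix (Fin n) (Fin n) F), A.det ≠ 0 →
    ∃ (P Q : Matrix (Fin n) (Fin n) F) (a : Fin n → ℤ),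
      GLO P ∧ GLO Q ∧ Monotone a ∧
      P * A * Q = Matrix.diagonal fun i => tpow (a i) := by
  induction n with
  | zero =>
    intro A _
    exact ⟨1, 1, fun _ => 0, GLO.one, GLO.one, fun i => i.elim0, by ext i; exact i.elim0⟩
  | succ n ih =>
    intro A hA
    set A0 := A.submatrix (eS n) (eS n) with hA0
    have hdet0 : A0.det ≠ 0 := by rw [hA0, Matrix.det_submatrix_equiv_self]; exact hA
    have hex : ∃ j, A0 (Sum.inl 0) j ≠ 0 := by
      by_contra h
      push Not at h
      exact hdet0 (Matrix.det_eq_zero_of_row_eq_zero _ h)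
    classical
    obtain ⟨⟨i0, j0⟩, hj0, hmin⟩ := Finset.exists_min_image
      (Finset.univ.filter fun p : (Fin 1 ⊕ Fin n) × (Fin 1 ⊕ Fin n) => A0 p.1 p.2 ≠ 0)
      (fun p => (A0 p.1 p.2).order)
      (by obtain ⟨j, hj⟩ := hex; exact ⟨(Sum.inl 0, j), by simpa using hj⟩)
    simp only [Finset.mem_filter, Finset.mem_univ, true_and, Prod.forall] at hj0 hmin
    set σ := Equiv.swap (Sum.inl 0) j0 with hσ
    set τ := Equiv.swap (Sum.inl 0) i0 with hτ
    set Pσ := (1 : Matrix (Fin 1 ⊕ Fin n) (Fin 1 ⊕ Fin n) F).submatrix id σ with hPσ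
    set Pτ := (1 : Matrix (Fin 1 ⊕ Fin n) (Fin 1 ⊕ Fin n) F).submatrix τ id with hPτ
    have hPG : GLO Pσ := GLO.one.submatrix (Equiv.refl _) σ
    have hTG : GLO Pτ := GLO.one.submatrix τ (Equiv.refl _)
    set B := Pτ * A0 * Pσ with hB
    have hB' : B = A0.submatrix τ σ := by
      rw [hB, ← my_perm, ← my_perm']; rfl
    set x := A0 i0 j0 with hx
    have hBx : B.toBlocks₁₁ = sc x := by
      rw [eq_sc B.toBlocks₁₁, hB']
      simp [Matrix.toBlocks₁₁, hσ, hτ, hx]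
    have hBO : ∀ i j, x⁻¹ * B i j ∈ Osub := by
      intro i j
      apply my_div_mem hj0
      rw [hB', Matrix.submatrix_apply]
      by_cases h0 : A0 (τ i) (σ j) = 0
      · exact Or.inl h0
      · exact Or.inr (hmin _ _ h0)
    set b := B.toBlocks₁₂ with hb
    have hbO : ∀ i j, (sc x⁻¹ * b) i j ∈ Osub := by
      intro i j
      rw [Subsingleton.elim i 0, Matrix.diagonal_mul]
      exact hBO _ _
    set y := B.toBlocks₂₁ with hy
    have hyO : ∀ i j, (y * sc x⁻¹) i j ∈ Osub := by
      intro i j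
      rw [Subsingleton.elim j 0, Matrix.mul_diagonal, mul_comm]
      exact hBO _ _
    set A' := B.toBlocks₂₂
    have hBB : B = fromBlocks (sc x) b y A' := by
      rw [← hBx]; exact (Matrix.fromBlocks_toBlocks B).symm
    obtain ⟨e, he0, he, he', hxe⟩ := my_unit hj0
    set k := x.order with hk
    set C1 := fromBlocks (sc e⁻¹) (-(sc x⁻¹ * b)) 0 (1 : Matrix (Fin n) (Fin n) F) with hC1d
    set R1 := fromBlocks (1 : Matrix (Fin 1) (Fin 1) F) 0 (-(y * sc x⁻¹))
      (1 : Matrix (Fin n) (Fin n) F) with hR1d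
    have hC1 : GLO C1 := by
      refine GLO.upper (GLO.diagonal (fun _ => inv_ne_zero he0) (fun _ => he') (fun _ => ?_))
        GLO.one (my_neg_mem hbO)
      simpa using he
    have hR1 : GLO R1 := GLO.lower GLO.one GLO.one (my_neg_mem hyO)
    set A'' := A' - y * sc x⁻¹ * b with hA''d
    have hmul1 : R1 * B * C1 = fromBlocks (sc (tpow k)) 0 0 A'' := by
      have h1 : R1 * B = fromBlocks (sc x) b 0 A'' := by
        rw [hBB, hR1d, fromBlocks_multiply]
        congr 1
        · simp
        · simp
        · rw [Matrix.neg_mul, Matrix.mul_assoc, sc_mul, inv_mul_cancel₀ hj0, sc_one]; simp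
        · simp [hA''d, Matrix.mul_assoc, sub_eq_add_neg, add_comm]
      rw [h1, hC1d, fromBlocks_multiply]
      congr 1
      · rw [sc_mul, hxe]; simp [he0]
      · rw [Matrix.mul_neg, ← Matrix.mul_assoc, sc_mul, mul_inv_cancel₀ hj0, sc_one]; simp
      · simp
      · simp
    have hA'' : A''.det ≠ 0 := by
      have h1 : (R1 * B * C1).det ≠ 0 := by
        rw [hB, Matrix.det_mul, Matrix.det_mul, Matrix.det_mul, Matrix.det_mul]
        exact mul_ne_zero (mul_ne_zero (my_det_GLO hR1)
          (mul_ne_zero (mul_ne_zero (my_det_GLO hTG) hdet0) (my_det_GLO hPG))) (my_det_GLO hC1)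
      rw [hmul1, Matrix.det_fromBlocks_zero₁₂] at h1
      exact right_ne_zero_of_mul h1
    have hA''O : ∀ i j, (A'' * (Matrix.diagonal fun _ => (tpow k)⁻¹ : Matrix (Fin n) (Fin n) F)) i j ∈ Osub := by
      have hAe : ∀ i j, x⁻¹ * A'' i j ∈ Osub := by
        intro i j
        have : x⁻¹ * A'' i j = x⁻¹ * A' i j - ((y * sc x⁻¹) * (sc x⁻¹ * b)) i j := by
          rw [hA''d, Matrix.sub_apply, mul_sub]
          congr 1
          rw [Matrix.mul_apply, Matrix.mul_apply]
          simp [Matrix.mul_diagonal, Matrix.diagonal_mul]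
          ring
        rw [this]
        exact Subring.sub_mem _ (hBO _ _) (my_mul_mem hyO hbO _ _)
      intro i j
      rw [Matrix.mul_diagonal]
      have : A'' i j * (tpow k)⁻¹ = e * (x⁻¹ * A'' i j) := by
        have := my_tpow_ne k
        rw [hxe]; field_simp
      rw [this]
      exact Subring.mul_mem _ he (hAe _ _)
    obtain ⟨P', Q', a', hP', hQ', ha', hd'⟩ := ih A'' hA''
    have hka : ∀ i, k ≤ a' i := by
      intro i
      obtain ⟨_, hPm, _⟩ := hP'
      obtain ⟨_, hQm, _⟩ := hQ'
      have h1 := my_mul_mem (my_mul_mem hPm hA''O) hQm i i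
      have h2 : P' * (A'' * Matrix.diagonal fun _ => (tpow k)⁻¹) * Q' =
          (P' * A'' * Q') * Matrix.diagonal fun _ => (tpow k)⁻¹ := by
        have hcomm : (Matrix.diagonal fun _ => (tpow k)⁻¹) * Q' =
            Q' * Matrix.diagonal fun _ => (tpow k)⁻¹ := by
          ext i j; simp [Matrix.mul_diagonal, Matrix.diagonal_mul, mul_comm]
        simp only [Matrix.mul_assoc, hcomm]
      rw [h2, hd', Matrix.diagonal_mul_diagonal, Matrix.diagonal_apply_eq, ← my_tpow_neg,
        ← my_tpow_add, my_tpow_mem] at h1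
      omega
    set Pb := fromBlocks (1 : Matrix (Fin 1) (Fin 1) F) 0 0 P' * R1 * Pτ with hPb
    set Cb := Pσ * C1 * fromBlocks 1 0 0 Q' with hCb
    have hmain : Pb * A0 * Cb =
        fromBlocks (sc (tpow k)) 0 0 (Matrix.diagonal fun i => tpow (a' i)) := by
      have : Pb * A0 * Cb = fromBlocks (1 : Matrix (Fin 1) (Fin 1) F) 0 0 P' * (R1 * B * C1) *
          fromBlocks 1 0 0 Q' := by
        rw [hPb, hCb, hB]; simp only [Matrix.mul_assoc]
      rw [this, hmul1, fromBlocks_multiply, fromBlocks_multiply]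
      congr 1
      · simp
      · simp
      · simp
      · simpa using hd'
    refine ⟨Pb.submatrix (eS n).symm (eS n).symm, Cb.submatrix (eS n).symm (eS n).symm,
      Fin.cons k a', ?_, ?_, ?_, ?_⟩
    · exact (((GLO.lower GLO.one hP' my_zero_mem).mul hR1).mul hTG).submatrix _ _
    · exact ((hPG.mul hC1).mul (GLO.lower GLO.one hQ' my_zero_mem)).submatrix _ _
    · intro i j
      refine Fin.cases ?_ (fun i => ?_) i <;> refine Fin.cases ?_ (fun j => ?_) j
      · simp
      · simp [hka]
      · intro h; simp at h
      · intro h; simpa using ha' (by simpa using h)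
    · have hAA : A = A0.submatrix (eS n).symm (eS n).symm := by simp [hA0]
      rw [hAA, Matrix.submatrix_mul_equiv, Matrix.submatrix_mul_equiv, hmain]
      ext i j
      refine Fin.cases ?_ (fun i => ?_) i <;> refine Fin.cases ?_ (fun j => ?_) j
      · simp [eS]
      · simp [eS, Matrix.diagonal_apply, (Fin.succ_ne_zero _).symm]
      · simp [eS, Matrix.diagonal_apply]
      · simp [eS, Matrix.diagonal_apply]

theorem my_choose (M : ℕ) (w : Fin M → ℤ) (d : Fin M → Fin M → ℤ) (hd0 : ∀ i, d i i = 0)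
    (htri : ∀ i j k, d i k ≤ d i j + d j k) :
    ∃ f : Fin M → Fin M, (∀ j i, w (f j) + d (f j) j ≤ w i + d i j) ∧
      (∀ j, f j ≠ j → w (f j) + d (f j) j < w j) ∧ (∀ j, f j ≠ j → f (f j) = f j) := by
  have h : ∀ j, ∃ i, (∀ i', w i + d i j ≤ w i' + d i' j) ∧ (i ≠ j → w i + d i j < w j) := by
    intro j
    obtain ⟨i, _, hi⟩ := Finset.exists_min_image Finset.univ (fun i => w i + d i j)
      ⟨j, Finset.mem_univ _⟩
    have hi : ∀ i', w i + d i j ≤ w i' + d i' j := fun i' => hi i' (Finset.mem_univ _)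
    by_cases hlt : w i + d i j < w j
    · exact ⟨i, hi, fun _ => hlt⟩
    · refine ⟨j, fun i' => ?_, fun h => absurd rfl h⟩
      have := hi i'
      rw [hd0]; omega
  choose f hf1 hf2 using h
  refine ⟨f, hf1, hf2, fun j hj => ?_⟩
  by_contra hne
  have h1 := hf2 _ hne
  have h2 := hf1 j (f (f j))
  have h3 := htri (f (f j)) (f j) j
  omega

theorem my_mirabolic (M : ℕ) (D : Matrix (Fin M) (Fin M) F) (hD : D.det ≠ 0)
    (v : Matrix (Fin 1) (Fin M) F) (c : ℤ) :
    ∃ (g : Matrix (Fin M) (Fin M) F) (C1 : Matrix (Fin M ⊕ Fin 1) (Fin M ⊕ Fin 1) F)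
      (lam th : Fin M → ℤ), GLO g ∧ GLO C1 ∧ Monotone lam ∧ Monotone th ∧ (∀ j, th j ≤ c) ∧
      fromBlocks g 0 0 1 * fromBlocks D 0 v (sc (tpow c)) * C1 =
        fromBlocks (Matrix.diagonal fun i => tpow (lam i + th i)) 0
          (Matrix.of fun _ j => tpow (th j)) (sc (tpow c)) := by
  obtain ⟨P, Q, a, hP, hQ, ha, hPQ⟩ := my_smith M D hD
  -- first step: make all entries of the last row nonzero of order at most `c`
  have hz : ∀ j, ∃ z : F, z ∈ Osub ∧ (v * Q) 0 j + tpow c * z ≠ 0 ∧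
      ((v * Q) 0 j + tpow c * z).order ≤ c := by
    intro j
    by_cases h : (v * Q) 0 j ≠ 0 ∧ ((v * Q) 0 j).order ≤ c
    · exact ⟨0, Subring.zero_mem _, by simpa using h.1, by simpa using h.2⟩
    · have heq : (v * Q) 0 j + tpow c * (1 - (tpow c)⁻¹ * (v * Q) 0 j) = tpow c := by
        have := my_tpow_ne c
        rw [mul_sub, mul_one, mul_inv_cancel_left₀ this, add_sub_cancel]
      refine ⟨1 - (tpow c)⁻¹ * (v * Q) 0 j, ?_, ?_, ?_⟩
      · refine Subring.sub_mem _ (Subring.one_mem _) (my_div_mem (my_tpow_ne c) ?_)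
        rw [my_tpow_order]
        by_contra h'
        push Not at h'
        exact h ⟨h'.1, h'.2.le⟩
      · rw [heq]; exact my_tpow_ne c
      · rw [heq, my_tpow_order]
  choose z hzO hz0 hzc using hz
  set zr : Matrix (Fin 1) (Fin M) F := Matrix.of fun _ j => z j with hzr
  set w : Fin M → F := fun j => (v * Q) 0 j + tpow c * z j with hw
  set d : Fin M → Fin M → ℤ := fun i j => max 0 (a j - a i) with hd
  obtain ⟨f, hf1, hf2, hf3⟩ := my_choose M (fun j => (w j).order) d (by simp [hd])
    (by intro i j k; simp only [hd]; omega)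
  -- the nilpotent matrices
  set Nm : Matrix (Fin M) (Fin M) F :=
    Matrix.of fun i j => if f j ≠ j ∧ i = f j then tpow (d i j) else 0 with hNm
  set Nm' : Matrix (Fin M) (Fin M) F :=
    Matrix.of fun i j => if f j ≠ j ∧ i = f j then tpow (a i + d i j - a j) else 0 with hNm'
  have hNN : Nm * Nm = 0 := by
    refine Matrix.ext fun i j => ?_
    rw [Matrix.mul_apply]
    change _ = (0 : F)
    refine Finset.sum_eq_zero fun k _ => ?_
    simp only [hNm, Matrix.of_apply]
    by_cases h : f j ≠ j ∧ k = f j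
    · have h3 := hf3 j h.1
      rw [← h.2] at h3
      simp [h3]
    · simp [h]
  have hNN' : Nm' * Nm' = 0 := by
    refine Matrix.ext fun i j => ?_
    rw [Matrix.mul_apply]
    change _ = (0 : F)
    refine Finset.sum_eq_zero fun k _ => ?_
    simp only [hNm', Matrix.of_apply]
    by_cases h : f j ≠ j ∧ k = f j
    · have h3 := hf3 j h.1
      rw [← h.2] at h3
      simp [h3]
    · simp [h]
  have hNmO : ∀ i j, Nm i j ∈ Osub := by
    intro i j
    simp only [hNm, Matrix.of_apply]
    split_ifs
    · rw [my_tpow_mem]; simp [hd]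
    · exact Subring.zero_mem _
  have hNmO' : ∀ i j, Nm' i j ∈ Osub := by
    intro i j
    simp only [hNm', Matrix.of_apply]
    split_ifs
    · rw [my_tpow_mem]; simp only [hd]; omega
    · exact Subring.zero_mem _
  have hcomm : Nm' * (Matrix.diagonal fun i => tpow (a i)) =
      (Matrix.diagonal fun i => tpow (a i)) * Nm := by
    refine Matrix.ext fun i j => ?_
    rw [Matrix.mul_diagonal, Matrix.diagonal_mul]
    simp only [hNm, hNm', Matrix.of_apply]
    split_ifs
    · rw [← my_tpow_add, ← my_tpow_add]; congr 1; ring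
    · simp
  have hg2 : GLO (1 - Nm') := by
    refine ⟨1 + Nm', fun i j => Subring.sub_mem _ (my_one_mem _ _) (hNmO' _ _),
      fun i j => Subring.add_mem _ (my_one_mem _ _) (hNmO' _ _), ?_, ?_⟩
    · simp [Matrix.sub_mul, Matrix.mul_add, hNN']
    · simp [Matrix.mul_sub, Matrix.add_mul, hNN']
  have hC2 : GLO (1 + Nm) := by
    refine ⟨1 - Nm, fun i j => Subring.add_mem _ (my_one_mem _ _) (hNmO _ _),
      fun i j => Subring.sub_mem _ (my_one_mem _ _) (hNmO _ _), ?_, ?_⟩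
    · simp [Matrix.mul_sub, Matrix.add_mul, hNN]
    · simp [Matrix.sub_mul, Matrix.mul_add, hNN]
  have hdiag2 : (1 - Nm') * (Matrix.diagonal fun i => tpow (a i)) * (1 + Nm) =
      Matrix.diagonal fun i => tpow (a i) := by
    rw [Matrix.sub_mul, hcomm, Matrix.sub_mul, Matrix.mul_add, Matrix.mul_add,
      Matrix.mul_assoc _ Nm Nm, hNN]
    simp
  set wr : Matrix (Fin 1) (Fin M) F := Matrix.of fun _ j => w j with hwr
  set th : Fin M → ℤ := fun j => (w (f j)).order + d (f j) j with hth
  set W2 : Matrix (Fin 1) (Fin M) F := wr * (1 + Nm) with hW2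
  have hw2 : ∀ j, W2 0 j ≠ 0 ∧ (W2 0 j).order = th j := by
    intro j
    have hval : W2 0 j =
        w j + if f j ≠ j then w (f j) * tpow (d (f j) j) else 0 := by
      rw [hW2, Matrix.mul_add, Matrix.mul_one, Matrix.add_apply, Matrix.mul_apply]
      simp only [hwr, hNm, Matrix.of_apply]
      congr 1
      by_cases h : f j = j
      · simp [h]
      · simp [h]
    rw [hval]
    by_cases h : f j = j
    · simp only [h, ne_eq, not_true_eq_false, if_false, add_zero, hth]
      exact ⟨hz0 j, by simp [hd]⟩
    · simp only [ne_eq, h, not_false_eq_true, if_true]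
      have ho : (w (f j) * tpow (d (f j) j)).order = th j := by
        rw [my_order_mul (hz0 _) (my_tpow_ne _), my_tpow_order]
      have := my_order_add (x := w j) (mul_ne_zero (hz0 (f j)) (my_tpow_ne (d (f j) j)))
        (by rw [ho]; exact hf2 j h)
      rw [ho] at this
      exact this
  have hu := fun j => my_unit (hw2 j).1
  choose e he0 heO heO' hwe using hu
  have hthd : ∀ i j, th j ≤ th i + d i j := by
    intro i j
    have h1 := hf1 j (f i)
    have h2 : d (f i) j ≤ d (f i) i + d i j := by simp only [hd]; omega
    simp only [hth]; omega
  refine ⟨Matrix.diagonal e * (1 - Nm') * P,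
    fromBlocks Q 0 zr 1 * fromBlocks (1 + Nm) 0 0 1 *
      fromBlocks (Matrix.diagonal fun j => (e j)⁻¹) 0 0 1, fun i => a i - th i, th,
    ((GLO.diagonal he0 heO heO').mul hg2).mul hP,
    ((GLO.lower hQ GLO.one fun _ j => hzO j).mul (GLO.lower hC2 GLO.one my_zero_mem)).mul
      (GLO.lower (GLO.diagonal (fun i => inv_ne_zero (he0 i)) heO' (by simpa using heO))
        GLO.one my_zero_mem), ?_, ?_, ?_, ?_⟩
  · intro i j hij
    have h1 := hthd i j
    have h2 := ha hij
    simp only [hd] at h1 ⊢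
    omega
  · intro i j hij
    have h1 := hthd j i
    have h2 := ha hij
    simp only [hd] at h1 ⊢
    omega
  · intro j
    have h1 := hf1 j j
    have h2 : d j j = 0 := by simp [hd]
    have h3 := hzc j
    simp only [hth]
    simp only [hw] at h1 h3 ⊢
    omega
  · have hrow : v * Q + sc (tpow c) * zr = wr := by
      refine Matrix.ext fun i j => ?_
      rw [Subsingleton.elim i 0, Matrix.add_apply, Matrix.diagonal_mul]
      simp [hwr, hw, hzr]
    have h1 : fromBlocks D 0 v (sc (tpow c)) * fromBlocks Q 0 zr 1
        = fromBlocks (D * Q) 0 wr (sc (tpow c)) := by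
      rw [fromBlocks_multiply, hrow]; simp
    rw [← Matrix.mul_assoc, ← Matrix.mul_assoc, Matrix.mul_assoc (fromBlocks _ _ _ _), h1,
      fromBlocks_multiply, fromBlocks_multiply, fromBlocks_multiply]
    congr 1
    · simp only [Matrix.zero_mul, Matrix.mul_zero, add_zero]
      have : Matrix.diagonal e * (1 - Nm') * P * (D * Q) * (1 + Nm) =
          Matrix.diagonal e * ((1 - Nm') * (P * D * Q) * (1 + Nm)) := by
        simp only [Matrix.mul_assoc]
      rw [this, hPQ, hdiag2, Matrix.diagonal_mul_diagonal, Matrix.diagonal_mul_diagonal]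
      congr 1
      ext1 i
      rw [sub_add_cancel, mul_comm (e i), mul_assoc, mul_inv_cancel₀ (he0 i), mul_one]
    · simp
    · simp only [Matrix.zero_mul, Matrix.mul_zero, add_zero, zero_add, Matrix.one_mul]
      refine Matrix.ext fun i j => ?_
      rw [Subsingleton.elim i 0, Matrix.mul_diagonal, ← hW2, hwe j, (hw2 j).2, mul_assoc,
        mul_inv_cancel₀ (he0 j), mul_one]
      simp
    · simp

/-- The block index set. -/
def eB (M K : ℕ) : (Fin M ⊕ Fin 1) ⊕ Fin K ≃ Fin (M + 1 + K) :=
  (Equiv.sumCongr finSumFinEquiv (Equiv.refl _)).trans finSumFinEquiv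

theorem eB1 (M K : ℕ) (i : Fin M) : ((eB M K (Sum.inl (Sum.inl i)) : Fin _) : ℕ) = i := by
  simp [eB]

theorem eB2 (M K : ℕ) (i : Fin 1) : ((eB M K (Sum.inl (Sum.inr i)) : Fin _) : ℕ) = M := by
  simp [eB]

theorem eB3 (M K : ℕ) (i : Fin K) : ((eB M K (Sum.inr i) : Fin _) : ℕ) = M + 1 + i := by
  simp [eB]

theorem embTop_block (M K : ℕ) (g : Matrix (Fin M) (Fin M) F) :
    (embTop M (M + 1 + K) g).submatrix (eB M K) (eB M K) =
      fromBlocks (fromBlocks g 0 0 1) 0 0 1 := by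
  refine Matrix.ext fun i j => ?_
  rcases i with (i | i) | i <;> rcases j with (j | j) | j <;>
    simp only [Matrix.submatrix_apply, embTop, eB1, eB2, eB3, fromBlocks_apply₁₁,
      fromBlocks_apply₁₂, fromBlocks_apply₂₁, fromBlocks_apply₂₂, Matrix.zero_apply]
  · simp
  · simp
  · have := j.isLt
    simp; intro; omega
  · have := j.isLt
    simp; omega
  · rw [Subsingleton.elim i j]; simp
  · simp; omega
  · have := j.isLt
    have h1 : ¬ (M + 1 + (i : ℕ) < M) := by omega
    have h3 : ¬ (M + 1 + (i : ℕ) = j) := by omega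
    simp [h1, h3]
  · have h1 : ¬ (M + 1 + (i : ℕ) < M) := by omega
    have h3 : ¬ (M + 1 + (i : ℕ) = M) := by omega
    simp [h1, h3]
  · have := i.isLt
    simp [Matrix.one_apply, Fin.ext_iff]; omega

theorem Lmat_block (M K : ℕ) (lam th : Fin M → ℤ) (c : ℤ) (th' : Fin K → ℤ) :
    (LmatN M K lam (fun j => if h : (j : ℕ) < M then th ⟨j, h⟩ else c) th').submatrix
      (eB M K) (eB M K) =
      fromBlocks (fromBlocks (Matrix.diagonal fun i => tpow (lam i + th i)) 0
          (Matrix.of fun _ j => tpow (th j)) (sc (tpow c))) 0 0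
        (Matrix.diagonal fun i => tpow (th' i)) := by
  refine Matrix.ext fun i j => ?_
  rcases i with (i | i) | i <;> rcases j with (j | j) | j <;>
    simp only [Matrix.submatrix_apply, LmatN, eB1, eB2, eB3, fromBlocks_apply₁₁,
      fromBlocks_apply₁₂, fromBlocks_apply₂₁, fromBlocks_apply₂₂, Matrix.zero_apply]
  · simp [Matrix.diagonal_apply, Fin.ext_iff]
  · have := i.isLt
    simp; omega
  · have := i.isLt
    simp; omega
  · have := j.isLt
    simp
  · rw [Subsingleton.elim i j]; simp
  · have h1 : ¬ (M + 1 + (j : ℕ) < M + 1) := by omega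
    simp [h1]
  · have := j.isLt
    have h1 : ¬ (M + 1 + (i : ℕ) < M) := by omega
    have h2 : ¬ (M + 1 + (i : ℕ) = M) := by omega
    have h3 : ¬ (M + 1 + (i : ℕ) = j) := by omega
    simp [h1, h2, h3]
  · have h1 : ¬ (M + 1 + (i : ℕ) < M) := by omega
    have h2 : ¬ (M + 1 + (i : ℕ) = M) := by omega
    simp [h1, h2]
  · have h1 : ¬ (M + 1 + (i : ℕ) < M) := by omega
    have h2 : ¬ (M + 1 + (i : ℕ) = M) := by omega
    simp [h1, h2, Matrix.diagonal_apply, Fin.ext_iff]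

theorem my_unip_det (n : ℕ) (u : Matrix (Fin n) (Fin n) F) (h1 : ∀ i, u i i = 1)
    (h2 : ∀ i j, i < j → u i j = 0) : u.det = 1 := by
  rw [Matrix.det_of_isLowerTriangular u (fun i j hij => h2 i j hij)]
  simp [h1]

/-- Every double coset `(GL_M(O) ⋉ U⁻_{M,N}(F)) \ GL_N(F) / GL_N(O)`
(`N = M+1+K`) has a representative of the form `L_{(λ,(θ,θ'))}` with `(λ,θ)` dominant of
length `(M, M+1)`: for every `A ∈ GL_N(F)` there are `g ∈ GL_M(O)`, `u ∈ U⁻_{M,N}(F)`,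
`C ∈ GL_N(O)` and integer sequences `λ, θ, θ'` with `g · u · A · C = L_{(λ,(θ,θ'))}`. -/
theorem stmt3 (M K : ℕ) (A : Matrix (Fin (M + 1 + K)) (Fin (M + 1 + K)) F)
    (hA : IsUnit A.det) :
    ∃ (lam : Fin M → ℤ) (th : Fin (M + 1) → ℤ) (th' : Fin K → ℤ)
      (g : Matrix (Fin M) (Fin M) F)
      (u C : Matrix (Fin (M + 1 + K)) (Fin (M + 1 + K)) F),
      Monotone lam ∧ Monotone th ∧ InGLO g ∧ InUminus M u ∧ InGLO C ∧
        embTop M (M + 1 + K) g * u * A * C = LmatN M K lam th th' := by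
  obtain ⟨u0, C0, d, hu1, hu2, hC0, hd⟩ := my_iwasawa _ A hA.ne_zero
  set e := eB M K with he
  set ue := u0.submatrix e e with hue
  set Ae := A.submatrix e e with hAe
  set Ce := C0.submatrix e e with hCe
  have hCeG : GLO Ce := hC0.submatrix e e
  have hprod : ue * Ae * Ce = fromBlocks
      (fromBlocks (Matrix.diagonal fun i => tpow (d (e (Sum.inl (Sum.inl i))))) 0 0
        (sc (tpow (d (e (Sum.inl (Sum.inr 0))))))) 0 0
      (Matrix.diagonal fun i => tpow (d (e (Sum.inr i)))) := by
    rw [hue, hAe, hCe, Matrix.submatrix_mul_equiv, Matrix.submatrix_mul_equiv, hd]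
    refine Matrix.ext fun i j => ?_
    rcases i with (i | i) | i <;> rcases j with (j | j) | j <;>
      simp [Matrix.diagonal_apply, Subsingleton.elim _ (0 : Fin 1)]
  set c := d (e (Sum.inl (Sum.inr 0)))
  set D1 : Matrix (Fin M) (Fin M) F :=
    Matrix.diagonal fun i => tpow (d (e (Sum.inl (Sum.inl i)))) with hD1
  have hlow : ∀ x y, (e x : ℕ) < e y → ue x y = 0 := fun x y h => hu2 _ _ h
  set u2 := ue.toBlocks₁₁.toBlocks₁₁ with hu2d
  set x := ue.toBlocks₁₁.toBlocks₂₁ with hxd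
  set X := ue.toBlocks₂₁ with hX
  set Y := ue.toBlocks₂₂ with hY
  have hue' : ue = fromBlocks (fromBlocks u2 0 x 1) 0 X Y := by
    refine Matrix.ext fun i j => ?_
    rcases i with (i | i) | i <;> rcases j with (j | j) | j
    · rfl
    · exact hlow _ _ ((eB1 M K i).trans_lt (i.isLt.trans_eq (eB2 M K j).symm))
    · exact hlow _ _ (by
        have h1 := eB1 M K i
        have h2 := eB3 M K j
        have := i.isLt
        rw [← he] at h1 h2
        omega)
    · rfl
    · rw [Subsingleton.elim i 0, Subsingleton.elim j 0]
      exact (hu1 _).trans (by simp)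
    · exact hlow _ _ (by
        have h1 := eB2 M K i
        have h2 := eB3 M K j
        rw [← he] at h1 h2
        omega)
    · rfl
    · rfl
    · rfl
  have hu2det : u2.det = 1 := by
    refine my_unip_det M u2 (fun i => hu1 _) (fun i j hij => hlow _ _ ?_)
    exact (eB1 M K i).trans_lt (lt_of_lt_of_eq hij (eB1 M K j).symm)
  have hu2inv : u2⁻¹ * u2 = 1 := Matrix.nonsing_inv_mul u2 (by rw [hu2det]; exact isUnit_one)
  set V := fromBlocks u2⁻¹ 0 (-(x * u2⁻¹)) (1 : Matrix (Fin 1) (Fin 1) F) with hV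
  set u' := fromBlocks (1 : Matrix (Fin M ⊕ Fin 1) (Fin M ⊕ Fin 1) F) 0 X Y with hu'
  have hVu : u' = fromBlocks V 0 0 1 * ue := by
    have hV1 : V * fromBlocks u2 0 x (1 : Matrix (Fin 1) (Fin 1) F) = 1 := by
      rw [hV, fromBlocks_multiply, ← fromBlocks_one]
      congr 1
      · simp [hu2inv]
      · simp
      · simp [Matrix.mul_assoc, hu2inv]
      · simp
    rw [hue', hu', fromBlocks_multiply, hV1]
    simp
  have hprod2 : u' * Ae * Ce = fromBlocks
      (fromBlocks (u2⁻¹ * D1) 0 (-(x * u2⁻¹) * D1) (sc (tpow c))) 0 0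
      (Matrix.diagonal fun i => tpow (d (e (Sum.inr i)))) := by
    rw [hVu, Matrix.mul_assoc, Matrix.mul_assoc, ← Matrix.mul_assoc ue, hprod,
      fromBlocks_multiply, hV, fromBlocks_multiply]
    simp
  have hDdet : (u2⁻¹ * D1).det ≠ 0 := by
    rw [Matrix.det_mul]
    refine mul_ne_zero ?_ ?_
    · have := congrArg Matrix.det hu2inv
      rw [Matrix.det_mul, Matrix.det_one] at this
      exact left_ne_zero_of_mul_eq_one this
    · rw [hD1, Matrix.det_diagonal]
      exact Finset.prod_ne_zero_iff.mpr fun i _ => my_tpow_ne _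
  obtain ⟨g, C1, lam, th, hg, hC1, hlam, hth, hthc, hfin⟩ :=
    my_mirabolic M (u2⁻¹ * D1) hDdet (-(x * u2⁻¹) * D1) c
  have hCfin : InGLO ((Ce * fromBlocks C1 0 0 1).submatrix e.symm e.symm) :=
    (hCeG.mul (GLO.lower hC1 GLO.one my_zero_mem)).submatrix e.symm e.symm
  refine ⟨lam, fun j => if h : (j : ℕ) < M then th ⟨j, h⟩ else c, fun i => d (e (Sum.inr i)), g,
    u'.submatrix e.symm e.symm, (Ce * fromBlocks C1 0 0 1).submatrix e.symm e.symm, hlam, ?_, hg,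
    ⟨?_, ?_⟩, hCfin, ?_⟩
  · intro i j hij
    have hij' : (i : ℕ) ≤ j := hij
    dsimp only
    split_ifs with h1 h2 h2
    · exact hth hij'
    · exact hthc _
    · omega
    · exact le_rfl
  · intro i
    obtain ⟨p, rfl⟩ := e.surjective i
    rw [Matrix.submatrix_apply, Equiv.symm_apply_apply]
    rcases p with p | p
    · simp [hu']
    · exact hu1 _
  · intro i j hij h
    obtain ⟨p, rfl⟩ := e.surjective i
    obtain ⟨q, rfl⟩ := e.surjective j
    rw [Matrix.submatrix_apply, Equiv.symm_apply_apply, Equiv.symm_apply_apply]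
    have hpq : p ≠ q := fun h => hij (by rw [h])
    rcases p with p | p
    · rcases q with q | q
      · rw [hu', fromBlocks_apply₁₁, Matrix.one_apply_ne (fun h => hpq (by rw [h]))]
      · rfl
    · have h' : (e (Sum.inr p) : ℕ) < e q := by
        have h1 : (e (Sum.inr p) : ℕ) = M + 1 + p := eB3 M K p
        have h2 : (e (Sum.inr p) : ℕ) ≠ e q := fun h => hij (Fin.ext h)
        omega
      have := hlow _ _ h'
      rw [hue'] at this
      rcases q with q | q
      · exact this
      · exact this
  · have hinj : ∀ S T : Matrix (Fin (M + 1 + K)) (Fin (M + 1 + K)) F,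
        S.submatrix e e = T.submatrix e e → S = T := by
      intro S T h
      have := congrArg (fun Z => Z.submatrix e.symm e.symm) h
      simpa using this
    apply hinj
    rw [Lmat_block, ← Matrix.submatrix_mul_equiv _ _ _ e, ← Matrix.submatrix_mul_equiv _ _ _ e,
      ← Matrix.submatrix_mul_equiv _ _ _ e, embTop_block]
    simp only [Matrix.submatrix_submatrix, Equiv.symm_comp_self, Matrix.submatrix_id_id]
    have : fromBlocks (fromBlocks g 0 0 1) 0 0 1 * u' * Ae * (Ce * fromBlocks C1 0 0 1) =
        fromBlocks (fromBlocks g 0 0 1) 0 0 1 * (u' * Ae * Ce) * fromBlocks C1 0 0 1 := by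
      simp only [Matrix.mul_assoc]
    rw [this, hprod2, fromBlocks_multiply, fromBlocks_multiply, ← hfin]
    simp
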